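/- arXiv:0808.2748 — 5 statements merged into one kernel-verified Lean document; each statement's English description precedes it below -/
import Mathlib

section
/- Let a0, a1, a2, b0 be real numbers with a2 > 0 and 4*a0*a2 - a1^2 > 0, and let a0' = (a0 - a1 + a2)*(a0 + a1 + a2), a1' = 2*a1*(a0 - a2), a2' = 4*a0*a2, b0' = 2*b0*(a0 + a2). Then ∫_{-∞}^{∞} b0' / (a0' + a1'*x + a2'*x^2) dx = ∫_{-∞}^{∞} b0 / (a0 + a1*x + a2*x^2) dx. -/
open MeasureTheory

theorem landen_aux_quad (c0 c1 c2 b s : ℝ) (hc : 0 < c2) (hs : 0 < s)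
    (h : 4 * c0 * c2 - c1 ^ 2 = s ^ 2) :
    ∫ x : ℝ, b / (c0 + c1 * x + c2 * x ^ 2) = 2 * Real.pi * b / s := by
  have h1 : ∀ x : ℝ, b / (c0 + c1 * x + c2 * x ^ 2)
      = (4 * c2 * b / s ^ 2) * (1 + ((2 * c2 / s) * x + c1 / s) ^ 2)⁻¹ := by
    intro x
    have e : 1 + ((2 * c2 / s) * x + c1 / s) ^ 2
        = 4 * c2 / s ^ 2 * (c0 + c1 * x + c2 * x ^ 2) := by
      field_simp
      linear_combination -h
    have hp : c0 + c1 * x + c2 * x ^ 2 ≠ 0 := by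
      intro h0
      rw [h0] at e
      nlinarith [sq_nonneg ((2 * c2 / s) * x + c1 / s)]
    rw [e]
    field_simp
  simp_rw [h1]
  rw [integral_const_mul,
    Measure.integral_comp_mul_left (fun y : ℝ => (1 + (y + c1 / s) ^ 2)⁻¹) (2 * c2 / s),
    integral_add_right_eq_self (fun y : ℝ => (1 + y ^ 2)⁻¹) (c1 / s),
    integral_univ_inv_one_add_sq, abs_of_pos (by positivity), smul_eq_mul]
  field_simp
  ring

theorem landen_order2_quadratic_invariance
    (a0 a1 a2 b0 : ℝ) (ha2 : a2 > 0) (hdisc : 4 * a0 * a2 - a1 ^ 2 > 0) :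
    ∫ x : ℝ, (2 * b0 * (a0 + a2)) /
        ((a0 - a1 + a2) * (a0 + a1 + a2) + (2 * a1 * (a0 - a2)) * x
          + (4 * a0 * a2) * x ^ 2)
      = ∫ x : ℝ, b0 / (a0 + a1 * x + a2 * x ^ 2) := by
  have hm : 0 < a0 * a2 := by nlinarith [sq_nonneg a1]
  have ha0 : 0 < a0 := pos_of_mul_pos_left hm ha2.le
  have hs : 0 < Real.sqrt (4 * a0 * a2 - a1 ^ 2) := Real.sqrt_pos.2 hdisc
  have hq := Real.sq_sqrt hdisc.le
  generalize Real.sqrt (4 * a0 * a2 - a1 ^ 2) = s at hs hq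
  rw [landen_aux_quad a0 a1 a2 b0 s ha2 hs hq.symm,
    landen_aux_quad _ _ _ _ (2 * (a0 + a2) * s) (by positivity) (by positivity)
      (by linear_combination (-4 * (a0 + a2) ^ 2) * hq)]
  field_simp
end

section
/- Let a0, a1, a2, b0 be real numbers with a2 > 0 and 4*a0*a2 - a1^2 > 0, and let a0' = (a0 - a1 + a2)*(a0 + a1 + a2), a1' = 2*a1*(a0 - a2), a2' = 4*a0*a2, b0' = 2*b0*(a0 + a2). Then a2' > 0 and 4*a0'*a2' - (a1')^2 > 0; that is, the order-2 Landen transformation maps quadratics with negative discriminant (hence finite integral over ℝ) to quadratics with negative discriminant. -/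
theorem landen_order2_preserves_negative_discriminant
    (a0 a1 a2 b0 a0' a1' a2' b0' : ℝ)
    (ha2 : a2 > 0) (hdisc : 4 * a0 * a2 - a1 ^ 2 > 0)
    (h0 : a0' = (a0 - a1 + a2) * (a0 + a1 + a2))
    (h1 : a1' = 2 * a1 * (a0 - a2))
    (h2 : a2' = 4 * a0 * a2)
    (h3 : b0' = 2 * b0 * (a0 + a2)) :
    a2' > 0 ∧ 4 * a0' * a2' - a1' ^ 2 > 0 := by
  have hp : 0 < 4 * a0 * a2 := by nlinarith [sq_nonneg a1]
  have ha0 : 0 < a0 := by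
    have h := pos_of_mul_pos_left hp ha2.le
    linarith
  subst h0 h1 h2
  refine ⟨hp, ?_⟩
  have key : 4 * ((a0 - a1 + a2) * (a0 + a1 + a2)) * (4 * a0 * a2) - (2 * a1 * (a0 - a2)) ^ 2
      = 4 * (a0 + a2) ^ 2 * (4 * a0 * a2 - a1 ^ 2) := by ring
  rw [key]
  have hs : 0 < a0 + a2 := by linarith
  exact mul_pos (by positivity) hdisc
end

section
/- Let a0, a1, a2, b0 be real numbers with a2 > 0, b0 > 0 and 4*a0*a2 - a1^2 > 0. Define sequences by (a_{0,0}, a_{1,0}, a_{2,0}, b_{0,0}) = (a0, a1, a2, b0) and a_{0,n+1} = (a_{0,n} - a_{1,n} + a_{2,n})*(a_{0,n} + a_{1,n} + a_{2,n}), a_{1,n+1} = 2*a_{1,n}*(a_{0,n} - a_{2,n}), a_{2,n+1} = 4*a_{0,n}*a_{2,n}, b_{0,n+1} = 2*b_{0,n}*(a_{0,n} + a_{2,n}). Set L = sqrt(4*a0*a2 - a1^2)/(2*b0). Then, as n → ∞, a_{0,n}/b_{0,n} → L, a_{1,n}/b_{0,n} → 0, and a_{2,n}/b_{0,n} → L;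 consequently π*b_{0,n}/a_{0,n} converges to ∫_{-∞}^{∞} b0/(a0 + a1*x + a2*x^2) dx. -/
open MeasureTheory Filter Real

lemma landen_integral (a0 a1 a2 b0 : ℝ) (ha2 : a2 > 0)
    (hdisc : 4 * a0 * a2 - a1 ^ 2 > 0) :
    ∫ x : ℝ, b0 / (a0 + a1 * x + a2 * x ^ 2)
      = 2 * π * b0 / Real.sqrt (4 * a0 * a2 - a1 ^ 2) := by
  set r := Real.sqrt (4 * a0 * a2 - a1 ^ 2) with hr
  have hr0 : 0 < r := Real.sqrt_pos.mpr hdisc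
  have hr2 : r ^ 2 = 4 * a0 * a2 - a1 ^ 2 := Real.sq_sqrt hdisc.le
  have key : ∀ x : ℝ, b0 / (a0 + a1 * x + a2 * x ^ 2)
      = (4 * a2 * b0 / r ^ 2) * (fun y : ℝ => (1 + (y + a1 / r) ^ 2)⁻¹) ((2 * a2 / r) * x) := by
    intro x
    have h1 : 1 + (2 * a2 / r * x + a1 / r) ^ 2
        = 4 * a2 * (a0 + a1 * x + a2 * x ^ 2) / r ^ 2 := by
      field_simp
      rw [hr2]; ring
    have h2 : 0 < 1 + (2 * a2 / r * x + a1 / r) ^ 2 := by positivity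
    have h3 : a0 + a1 * x + a2 * x ^ 2 ≠ 0 := by
      intro h
      rw [h] at h1
      simp only [mul_zero, zero_div] at h1
      linarith
    simp only [h1]
    generalize a0 + a1 * x + a2 * x ^ 2 = q at h3
    field_simp
  simp_rw [key]
  rw [integral_const_mul, Measure.integral_comp_mul_left (fun y : ℝ => (1 + (y + a1 / r) ^ 2)⁻¹),
    integral_add_right_eq_self (fun y : ℝ => (1 + y ^ 2)⁻¹), integral_univ_inv_one_add_sq,
    abs_of_pos (by positivity), smul_eq_mul]
  field_simp
  try ring

theorem landen_order2_quadratic_convergence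
    (a0 a1 a2 b0 : ℝ) (ha2 : a2 > 0) (hb0 : b0 > 0)
    (hdisc : 4 * a0 * a2 - a1 ^ 2 > 0)
    (A0 A1 A2 B0 : ℕ → ℝ)
    (hA0 : A0 0 = a0) (hA1 : A1 0 = a1) (hA2 : A2 0 = a2) (hB0 : B0 0 = b0)
    (hrec0 : ∀ n, A0 (n + 1) = (A0 n - A1 n + A2 n) * (A0 n + A1 n + A2 n))
    (hrec1 : ∀ n, A1 (n + 1) = 2 * A1 n * (A0 n - A2 n))
    (hrec2 : ∀ n, A2 (n + 1) = 4 * A0 n * A2 n)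
    (hrec3 : ∀ n, B0 (n + 1) = 2 * B0 n * (A0 n + A2 n))
    (L : ℝ) (hL : L = Real.sqrt (4 * a0 * a2 - a1 ^ 2) / (2 * b0)) :
    Tendsto (fun n => A0 n / B0 n) atTop (nhds L) ∧
    Tendsto (fun n => A1 n / B0 n) atTop (nhds 0) ∧
    Tendsto (fun n => A2 n / B0 n) atTop (nhds L) ∧
    Tendsto (fun n => π * B0 n / A0 n) atTop
      (nhds (∫ x : ℝ, b0 / (a0 + a1 * x + a2 * x ^ 2))) := by
  have hinv : ∀ n, 0 < A0 n ∧ 0 < A2 n ∧ 0 < B0 n ∧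
      4 * A0 n * A2 n - A1 n ^ 2 = (2 * L) ^ 2 * B0 n ^ 2 := by
    intro n
    induction n with
    | zero =>
      rw [hA0, hA1, hA2, hB0]
      refine ⟨?_, ha2, hb0, ?_⟩
      · by_contra h
        nlinarith [sq_nonneg a1, mul_nonneg (sub_nonneg.mpr (not_lt.mp h)) ha2.le]
      · rw [hL]
        have := Real.sq_sqrt hdisc.le
        field_simp
        linarith
    | succ n ih =>
      obtain ⟨h0, h2, hb, hd⟩ := ih
      have hLB : 0 < (2 * L) ^ 2 * B0 n ^ 2 := by
        have : 0 < L := by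
          rw [hL]
          have := Real.sqrt_pos.mpr hdisc
          positivity
        positivity
      rw [hrec0, hrec1, hrec2, hrec3]
      refine ⟨?_, by positivity, by positivity, ?_⟩
      · nlinarith [sq_nonneg (A0 n - A2 n)]
      · linear_combination (4 * (A0 n + A2 n) ^ 2) * hd
  have hLpos : 0 < L := by
    rw [hL]
    have := Real.sqrt_pos.mpr hdisc
    positivity
  let s : ℕ → ℝ := fun n => (A0 n + A2 n) / B0 n
  let d : ℕ → ℝ := fun n => (A0 n - A2 n) / B0 n
  let y : ℕ → ℝ := fun n => A1 n / B0 n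
  have hspos : ∀ n, 0 < s n := by
    intro n
    obtain ⟨h0, h2, hb, hd⟩ := hinv n
    simp only [s]; positivity
  have hid : ∀ n, d n ^ 2 + y n ^ 2 = s n ^ 2 - (2 * L) ^ 2 := by
    intro n
    obtain ⟨h0, h2, hb, hd⟩ := hinv n
    have : (2 * L) ^ 2 = (4 * A0 n * A2 n - A1 n ^ 2) / B0 n ^ 2 := by
      rw [hd]; field_simp
    rw [this]
    simp only [s, d, y]
    field_simp
    ring
  have hsL : ∀ n, 2 * L ≤ s n := by
    intro n
    nlinarith [hid n, sq_nonneg (d n), sq_nonneg (y n), hspos n]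
  have hstep : ∀ n, s (n + 1) - 2 * L = (s n - 2 * L) ^ 2 / (2 * s n) := by
    intro n
    obtain ⟨h0, h2, hb, hd⟩ := hinv n
    have e : s (n + 1) = (s n ^ 2 + (2 * L) ^ 2) / (2 * s n) := by
      have : (2 * L) ^ 2 = (4 * A0 n * A2 n - A1 n ^ 2) / B0 n ^ 2 := by
        rw [hd]; field_simp
      rw [this]
      simp only [s, hrec0, hrec2, hrec3]
      have : A0 n + A2 n ≠ 0 := by positivity
      field_simp
      ring
    rw [e]
    have := (hspos n).ne'
    field_simp
    ring
  have hbound : ∀ n, s n - 2 * L ≤ (s 0 - 2 * L) * (1 / 2) ^ n := by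
    intro n
    induction n with
    | zero => simp
    | succ n ih =>
      have : s (n + 1) - 2 * L ≤ (s n - 2 * L) / 2 := by
        rw [hstep, div_le_div_iff₀ (by have := hspos n; positivity) two_pos]
        nlinarith [hsL n, mul_nonneg (sub_nonneg.mpr (hsL n)) hLpos.le]
      rw [pow_succ]
      linarith
  have hs0 : Tendsto (fun n => s n - 2 * L) atTop (nhds 0) := by
    refine squeeze_zero (fun n => sub_nonneg.mpr (hsL n)) hbound ?_
    have := (tendsto_pow_atTop_nhds_zero_of_lt_one (r := (1 / 2 : ℝ)) (by norm_num)
      (by norm_num)).const_mul (s 0 - 2 * L)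
    simpa using this
  have hs : Tendsto s atTop (nhds (2 * L)) := by
    simpa using hs0.add_const (2 * L)
  have hq : Tendsto (fun n => Real.sqrt (s n ^ 2 - (2 * L) ^ 2)) atTop (nhds 0) := by
    have := ((hs.pow 2).sub_const ((2 * L) ^ 2)).sqrt
    simpa using this
  have hd : Tendsto d atTop (nhds 0) := by
    refine squeeze_zero_norm (fun n => ?_) hq
    rw [Real.norm_eq_abs]
    exact Real.abs_le_sqrt (by nlinarith [hid n, sq_nonneg (y n)])
  have hy : Tendsto y atTop (nhds 0) := by
    refine squeeze_zero_norm (fun n => ?_) hq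
    rw [Real.norm_eq_abs]
    exact Real.abs_le_sqrt (by nlinarith [hid n, sq_nonneg (d n)])
  have hx : Tendsto (fun n => A0 n / B0 n) atTop (nhds L) := by
    have := (hs.add hd).div_const 2
    convert this using 2
    · simp only [s, d]; ring
    · ring
  have hz : Tendsto (fun n => A2 n / B0 n) atTop (nhds L) := by
    have := (hs.sub hd).div_const 2
    convert this using 2
    · simp only [s, d]; ring
    · ring
  refine ⟨hx, hy, hz, ?_⟩
  rw [landen_integral a0 a1 a2 b0 ha2 hdisc]
  have := (hx.inv₀ hLpos.ne').const_mul π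
  convert this using 2
  · rw [inv_div]; ring
  · rw [hL, inv_div]; ring
end

section
/- ∫_{-∞}^{∞} 4*(2x^2 + 6x + 15) / (208x^4 + 456x^3 + 600x^2 + 396x + 171) dx = ∫_{-∞}^{∞} 1/(x^4 + 6x^3 + 16x^2 + 21x + 13) dx. -/
open MeasureTheory

theorem landen_denF (x : ℝ) :
    (1 / 10) * (1 + x ^ 2) ≤ x ^ 4 + 6 * x ^ 3 + 16 * x ^ 2 + 21 * x + 13 := by
  nlinarith [sq_nonneg (x ^ 2 + 3 * x + 5 / 2), sq_nonneg (x + 3 / 2), sq_nonneg (x ^ 2 + 3 * x + 9 / 4)]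

theorem landen_denF_pos (x : ℝ) :
    0 < x ^ 4 + 6 * x ^ 3 + 16 * x ^ 2 + 21 * x + 13 := by
  nlinarith [landen_denF x, sq_nonneg x]

theorem landen_denR_pos (x : ℝ) :
    0 < 208 * x ^ 4 + 456 * x ^ 3 + 600 * x ^ 2 + 396 * x + 171 := by
  nlinarith [sq_nonneg (208 * x ^ 2 + 228 * x + 130), sq_nonneg (x + 1 / 2), sq_nonneg x, sq_nonneg (x + 3 / 4)]

theorem landen_intF :
    Integrable (fun x : ℝ => 1 / (x ^ 4 + 6 * x ^ 3 + 16 * x ^ 2 + 21 * x + 13)) := by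
  refine Integrable.mono' (integrable_inv_one_add_sq.const_mul 10) ?_ ?_
  · refine Continuous.aestronglyMeasurable ?_
    exact continuous_const.div (by fun_prop) (fun x => (landen_denF_pos x).ne')
  · refine Filter.Eventually.of_forall fun x => ?_
    have h := landen_denF_pos x
    have h1 : 0 < 1 + x ^ 2 := by positivity
    rw [Real.norm_of_nonneg (by positivity), ← div_eq_mul_inv, div_le_div_iff₀ h h1]
    linarith [landen_denF x]

theorem landen_image_phi : (fun x : ℝ => (x - x⁻¹) / 2) '' Set.Ioi 0 = Set.univ := by
  refine Set.eq_univ_of_forall fun y => ?_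
  have h0 : 0 < y ^ 2 + 1 := by positivity
  have hs := Real.sq_sqrt h0.le
  have hlt : |y| < √(y ^ 2 + 1) := by
    rw [← Real.sqrt_sq_eq_abs]; exact Real.sqrt_lt_sqrt (sq_nonneg y) (by linarith)
  have hp : 0 < y + √(y ^ 2 + 1) := by linarith [neg_abs_le y]
  refine ⟨y + √(y ^ 2 + 1), hp, ?_⟩
  have : (y + √(y ^ 2 + 1))⁻¹ = √(y ^ 2 + 1) - y := by
    apply inv_eq_of_mul_eq_one_right
    nlinarith
  simp only [this]; ring

theorem landen_inj_phi : Set.InjOn (fun x : ℝ => (x - x⁻¹) / 2) (Set.Ioi 0) := by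
  apply StrictMonoOn.injOn
  intro a ha b hb hab
  have : b⁻¹ < a⁻¹ := inv_strictAnti₀ ha hab
  simp only
  linarith

theorem landen_image_psi : (fun x : ℝ => -x⁻¹) '' Set.Ioi 0 = Set.Iio 0 := by
  ext y
  constructor
  · rintro ⟨x, hx, rfl⟩
    have : 0 < x⁻¹ := inv_pos.mpr hx
    simpa using this
  · intro hy
    refine ⟨-y⁻¹, ?_, by simp⟩
    have : y⁻¹ < 0 := inv_lt_zero.mpr hy
    simpa using this

theorem landen_step_one_invariance :
    ∫ x : ℝ, 4 * (2 * x ^ 2 + 6 * x + 15) /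
        (208 * x ^ 4 + 456 * x ^ 3 + 600 * x ^ 2 + 396 * x + 171)
      = ∫ x : ℝ, 1 / (x ^ 4 + 6 * x ^ 3 + 16 * x ^ 2 + 21 * x + 13) := by
  have hdpsi : ∀ x ∈ Set.Ioi (0 : ℝ), HasDerivWithinAt (fun x : ℝ => -x⁻¹) ((x ^ 2)⁻¹) (Set.Ioi 0) x := by
    intro x hx
    have hx0 : x ≠ 0 := ne_of_gt hx
    have := (hasDerivAt_inv hx0).fun_neg
    simpa using this.hasDerivWithinAt
  have hdphi : ∀ x ∈ Set.Ioi (0 : ℝ), HasDerivWithinAt (fun x : ℝ => (x - x⁻¹) / 2)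
      ((1 + (x ^ 2)⁻¹) / 2) (Set.Ioi 0) x := by
    intro x hx
    have hx0 : x ≠ 0 := ne_of_gt hx
    have := ((hasDerivAt_id' x).fun_sub (hasDerivAt_inv hx0)).div_const 2
    simpa using this.hasDerivWithinAt
  have hinj : Set.InjOn (fun x : ℝ => -x⁻¹) (Set.Ioi 0) := by
    intro a _ b _ h
    simpa using h
  have hR := integral_image_eq_integral_abs_deriv_smul measurableSet_Ioi hdphi landen_inj_phi
    (fun x : ℝ => 4 * (2 * x ^ 2 + 6 * x + 15) /
        (208 * x ^ 4 + 456 * x ^ 3 + 600 * x ^ 2 + 396 * x + 171))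
  have hN := integral_image_eq_integral_abs_deriv_smul measurableSet_Ioi hdpsi hinj
    (fun x : ℝ => 1 / (x ^ 4 + 6 * x ^ 3 + 16 * x ^ 2 + 21 * x + 13))
  have hI := (integrableOn_image_iff_integrableOn_abs_deriv_smul measurableSet_Ioi hdpsi hinj
    (fun x : ℝ => 1 / (x ^ 4 + 6 * x ^ 3 + 16 * x ^ 2 + 21 * x + 13))).1 landen_intF.integrableOn
  rw [landen_image_phi, setIntegral_univ] at hR
  rw [landen_image_psi] at hN
  rw [hR, ← intervalIntegral.integral_Iio_add_Ici (b := (0 : ℝ)) landen_intF.integrableOn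
    landen_intF.integrableOn, hN, integral_Ici_eq_integral_Ioi, ← integral_add hI landen_intF.integrableOn]
  refine setIntegral_congr_fun measurableSet_Ioi fun x hx => ?_
  have hx0 : x ≠ 0 := ne_of_gt hx
  have hxp : 0 < x := hx
  have h1 := (landen_denF_pos x).ne'
  have h2 := (landen_denF_pos (-x⁻¹)).ne'
  have h3 := (landen_denR_pos ((x - x⁻¹) / 2)).ne'
  simp only [smul_eq_mul]
  rw [abs_of_pos (by positivity), abs_of_pos (by positivity)]
  have e2 : (-x⁻¹) ^ 4 + 6 * (-x⁻¹) ^ 3 + 16 * (-x⁻¹) ^ 2 + 21 * (-x⁻¹) + 13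
      = (1 - 6 * x + 16 * x ^ 2 - 21 * x ^ 3 + 13 * x ^ 4) / x ^ 4 := by
    field_simp; ring
  have e3 : 208 * ((x - x⁻¹) / 2) ^ 4 + 456 * ((x - x⁻¹) / 2) ^ 3 + 600 * ((x - x⁻¹) / 2) ^ 2
      + 396 * ((x - x⁻¹) / 2) + 171
      = (x ^ 4 + 6 * x ^ 3 + 16 * x ^ 2 + 21 * x + 13) *
        (1 - 6 * x + 16 * x ^ 2 - 21 * x ^ 3 + 13 * x ^ 4) / x ^ 4 := by
    field_simp; ring
  have h4 : 1 - 6 * x + 16 * x ^ 2 - 21 * x ^ 3 + 13 * x ^ 4 ≠ 0 := by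
    intro h; rw [e2, h] at h2; simp at h2
  rw [e2, e3]
  clear e2 e3 h2 h3 hI hN hR
  generalize hG : 1 - 6 * x + 16 * x ^ 2 - 21 * x ^ 3 + 13 * x ^ 4 = G at *
  generalize hH : x ^ 4 + 6 * x ^ 3 + 16 * x ^ 2 + 21 * x + 13 = H at *
  field_simp
  rw [← hG, ← hH]
  ring
end

section
/- For real numbers a, b > 0, define G(a,b) = ∫_{0}^{π/2} dθ / sqrt( a^2 * cos^2 θ + b^2 * sin^2 θ ). Then G(a, b) = G( (a+b)/2, sqrt(a*b) ). -/
open MeasureTheory Real intervalIntegral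

/-- The elliptic integral `G(a,b) = ∫_0^{π/2} dθ / sqrt(a² cos² θ + b² sin² θ)`. -/
noncomputable def ellipticG (a b : ℝ) : ℝ :=
  ∫ θ in (0:ℝ)..(π / 2),
    1 / Real.sqrt (a ^ 2 * Real.cos θ ^ 2 + b ^ 2 * Real.sin θ ^ 2)

theorem agm_symm (p q : ℝ) (hp : 0 < p) (hq : 0 < q) :
    (∫ θ in (0:ℝ)..π, 1 / Real.sqrt (p * Real.cos θ ^ 2 + q * Real.sin θ ^ 2)) =
    2 * ∫ θ in (0:ℝ)..(π / 2), 1 / Real.sqrt (p * Real.cos θ ^ 2 + q * Real.sin θ ^ 2) := by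
  have hpos : ∀ θ : ℝ, 0 < p * Real.cos θ ^ 2 + q * Real.sin θ ^ 2 := by
    intro θ
    rcases le_total p q with h | h
    · nlinarith [Real.sin_sq_add_cos_sq θ, sq_nonneg (Real.sin θ)]
    · nlinarith [Real.sin_sq_add_cos_sq θ, sq_nonneg (Real.cos θ)]
  have hc : Continuous fun θ : ℝ => 1 / Real.sqrt (p * Real.cos θ ^ 2 + q * Real.sin θ ^ 2) := by
    refine Continuous.div continuous_const (by fun_prop) ?_
    intro θ
    exact (Real.sqrt_pos.2 (hpos θ)).ne'
  have h2 := intervalIntegral.integral_comp_sub_left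
    (fun θ : ℝ => 1 / Real.sqrt (p * Real.cos θ ^ 2 + q * Real.sin θ ^ 2)) π (a := 0) (b := π / 2)
  simp only [Real.cos_pi_sub, Real.sin_pi_sub, neg_sq, sub_zero] at h2
  rw [show π - π / 2 = π / 2 by ring] at h2
  rw [← intervalIntegral.integral_add_adjacent_intervals
    (hc.intervalIntegrable 0 (π / 2)) (hc.intervalIntegrable (π / 2) π), ← h2]
  ring

theorem ellipticG_agm_invariance (a b : ℝ) (ha : a > 0) (hb : b > 0) :
    ellipticG a b = ellipticG ((a + b) / 2) (Real.sqrt (a * b)) := by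
  have hab : 0 < a * b := mul_pos ha hb
  unfold ellipticG
  rw [Real.sq_sqrt hab.le]
  have hs := agm_symm (((a + b) / 2) ^ 2) (a * b) (by positivity) hab
  have hD : ∀ θ : ℝ, 0 < a ^ 2 * Real.cos θ ^ 2 + b ^ 2 * Real.sin θ ^ 2 := by
    intro θ
    have h1 := Real.sin_sq_add_cos_sq θ
    by_cases h : Real.cos θ = 0
    · have : Real.sin θ ^ 2 = 1 := by rw [h] at h1; linarith
      rw [h, this]; positivity
    · positivity
  have hv : ∀ θ : ℝ, 0 < a * Real.cos θ ^ 2 + b * Real.sin θ ^ 2 := by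
    intro θ
    have h1 := Real.sin_sq_add_cos_sq θ
    by_cases h : Real.cos θ = 0
    · have : Real.sin θ ^ 2 = 1 := by rw [h] at h1; linarith
      rw [h, this]; positivity
    · positivity
  have hg : Continuous fun θ : ℝ =>
      1 / Real.sqrt (((a + b) / 2) ^ 2 * Real.cos θ ^ 2 + a * b * Real.sin θ ^ 2) := by
    refine Continuous.div continuous_const (by fun_prop) ?_
    intro θ
    refine (Real.sqrt_pos.2 ?_).ne'
    have h1 := Real.sin_sq_add_cos_sq θ
    by_cases h : Real.cos θ = 0
    · have : Real.sin θ ^ 2 = 1 := by rw [h] at h1; linarith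
      rw [h, this]; positivity
    · positivity
  let f : ℝ → ℝ := fun θ => 2 * θ - Real.arctan
    ((a - b) * (Real.sin θ * Real.cos θ) / (a * Real.cos θ ^ 2 + b * Real.sin θ ^ 2))
  let f' : ℝ → ℝ := fun θ => 1 + a * b / (a ^ 2 * Real.cos θ ^ 2 + b ^ 2 * Real.sin θ ^ 2)
  have huv : ∀ θ : ℝ, ((a - b) * (Real.sin θ * Real.cos θ)) ^ 2 +
      (a * Real.cos θ ^ 2 + b * Real.sin θ ^ 2) ^ 2
      = a ^ 2 * Real.cos θ ^ 2 + b ^ 2 * Real.sin θ ^ 2 := by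
    intro θ
    have h1 := Real.sin_sq_add_cos_sq θ
    linear_combination (a ^ 2 * Real.cos θ ^ 2 + b ^ 2 * Real.sin θ ^ 2) * h1
  have hf : ∀ θ : ℝ, HasDerivAt f (f' θ) θ := by
    intro θ
    have h1 := Real.sin_sq_add_cos_sq θ
    have hu : HasDerivAt (fun θ : ℝ => (a - b) * (Real.sin θ * Real.cos θ))
        ((a - b) * (Real.cos θ * Real.cos θ + Real.sin θ * -Real.sin θ)) θ :=
      ((Real.hasDerivAt_sin θ).mul (Real.hasDerivAt_cos θ)).const_mul _
    have hw : HasDerivAt (fun θ : ℝ => a * Real.cos θ ^ 2 + b * Real.sin θ ^ 2)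
        (a * (2 * Real.cos θ * -Real.sin θ) + b * (2 * Real.sin θ * Real.cos θ)) θ := by
      have e1 := ((Real.hasDerivAt_cos θ).pow 2).const_mul a
      have e2 := ((Real.hasDerivAt_sin θ).pow 2).const_mul b
      refine (e1.add e2).congr_deriv ?_
      simp
    have h := ((hasDerivAt_id θ).const_mul 2).sub ((hu.div hw (hv θ).ne').arctan)
    refine h.congr_deriv ?_
    have hq : 1 + ((a - b) * (Real.sin θ * Real.cos θ) /
        (a * Real.cos θ ^ 2 + b * Real.sin θ ^ 2)) ^ 2 =
        (a ^ 2 * Real.cos θ ^ 2 + b ^ 2 * Real.sin θ ^ 2) /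
        (a * Real.cos θ ^ 2 + b * Real.sin θ ^ 2) ^ 2 := by
      rw [← huv θ]
      have := (hv θ).ne'
      field_simp
      ring
    have hD' := (hD θ).ne'
    have hv' := (hv θ).ne'
    simp only [Pi.div_apply, f']
    rw [hq]
    generalize Real.sin θ = s at *
    generalize Real.cos θ = c at *
    have hc : c ^ 2 = 1 - s ^ 2 := by linarith
    field_simp
    have hc4 : c ^ 4 = (1 - s ^ 2) ^ 2 := by rw [← hc]; ring
    ring_nf
    simp only [hc, hc4]
    ring
  have hf'c : Continuous f' :=
    continuous_const.add (Continuous.div continuous_const (by fun_prop) fun θ => (hD θ).ne')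
  have key := intervalIntegral.integral_comp_mul_deriv (a := 0) (b := π / 2)
    (fun x _ => hf x) hf'c.continuousOn hg
  have f0 : f 0 = 0 := by simp [f]
  have f1 : f (π / 2) = π := by simp [f]; ring
  rw [f0, f1, hs] at key
  have hpt : ∀ θ : ℝ, ((fun θ : ℝ =>
      1 / Real.sqrt (((a + b) / 2) ^ 2 * Real.cos θ ^ 2 + a * b * Real.sin θ ^ 2)) ∘ f) θ * f' θ
      = 2 * (1 / Real.sqrt (a ^ 2 * Real.cos θ ^ 2 + b ^ 2 * Real.sin θ ^ 2)) := by
    intro θ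
    have h1 := Real.sin_sq_add_cos_sq θ
    have hD0 := hD θ
    have hv0 := hv θ
    have huv0 := huv θ
    simp only [Function.comp, f, f']
    set D := a ^ 2 * Real.cos θ ^ 2 + b ^ 2 * Real.sin θ ^ 2 with hDdef
    set u := (a - b) * (Real.sin θ * Real.cos θ) with hu
    set v := a * Real.cos θ ^ 2 + b * Real.sin θ ^ 2 with hvd
    have hr : 0 < Real.sqrt D := Real.sqrt_pos.2 hD0
    have hr2 : Real.sqrt D ^ 2 = D := Real.sq_sqrt hD0.le
    have hsq : Real.sqrt (1 + (u / v) ^ 2) = Real.sqrt D / v := by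
      rw [← Real.sqrt_sq hv0.le, ← Real.sqrt_div hD0.le, Real.sqrt_sq hv0.le, ← huv0]
      congr 1
      field_simp
      ring
    have hco : Real.cos (Real.arctan (u / v)) = v / Real.sqrt D := by
      rw [Real.cos_arctan, hsq, one_div_div]
    have hsi : Real.sin (Real.arctan (u / v)) = u / Real.sqrt D := by
      rw [Real.sin_arctan, hsq]
      field_simp
    have hC : Real.cos (2 * θ - Real.arctan (u / v)) =
        (a * Real.cos θ ^ 2 - b * Real.sin θ ^ 2) / Real.sqrt D := by
      rw [Real.cos_sub, hco, hsi, Real.cos_two_mul', Real.sin_two_mul]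
      field_simp
      rw [hu, hvd]
      linear_combination (a * Real.cos θ ^ 2 - b * Real.sin θ ^ 2) * h1
    have hS : Real.sin (2 * θ - Real.arctan (u / v)) =
        (a + b) * (Real.sin θ * Real.cos θ) / Real.sqrt D := by
      rw [Real.sin_sub, hco, hsi, Real.cos_two_mul', Real.sin_two_mul]
      field_simp
      rw [hu, hvd]
      linear_combination (a + b) * (Real.sin θ * Real.cos θ) * h1
    have hT : (a + b) * v = D + a * b := by
      rw [hvd, hDdef]
      linear_combination (a * b) * h1
    have hin : ((a + b) / 2) ^ 2 * ((a * Real.cos θ ^ 2 - b * Real.sin θ ^ 2) / Real.sqrt D) ^ 2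
        + a * b * ((a + b) * (Real.sin θ * Real.cos θ) / Real.sqrt D) ^ 2
        = ((D + a * b) / (2 * Real.sqrt D)) ^ 2 := by
      rw [← hT, hvd]
      field_simp
      ring
    rw [hC, hS, hin, Real.sqrt_sq (by positivity)]
    have : D + a * b ≠ 0 := by positivity
    field_simp
    rw [hr2]
  simp only [hpt] at key
  rw [intervalIntegral.integral_const_mul] at key
  linarith
end
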